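/- For every definition of area μ on 2-dimensional normed planes, the quantity q(μ) = inf over norms s on ℝ² of J^μ(s)/J^i(s) satisfies 1/2 ≤ q(μ) ≤ 1, where J^μ is the Jacobian of μ and J^i is the inscribed Riemannian Jacobian J^i(s) = π/(area of the Loewner ellipse of the unit ball of s). Moreover q(μ^i) = 1. -/

import Mathlib

open Matrix MeasureTheory Real

noncomputable section

/-- The Euclidean plane. -/
abbrev E2 := EuclideanSpace ℝ (Fin 2)

/-- `SL(2,ℝ)` as matrices of determinant one. -/
abbrev SL2 := Matrix.SpecialLinearGroup (Fin 2) ℝ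

/-- The seminorm `v ↦ s (M v)`, i.e. `s ∘ M`. -/
def compM (s : Seminorm ℝ E2) (M : Matrix (Fin 2) (Fin 2) ℝ) : Seminorm ℝ E2 :=
  s.comp (Matrix.toEuclideanLin M)

/-- A seminorm is a norm iff it is positive away from the origin. -/
def IsNorm (s : Seminorm ℝ E2) : Prop := ∀ v : E2, v ≠ 0 → 0 < s v

/-- Monotonicity of a functional on seminorms. -/
def Monot (J : Seminorm ℝ E2 → ℝ) : Prop := ∀ s s' : Seminorm ℝ E2, s' ≤ s → J s' ≤ J s

/-- Degree 2 homogeneity of a functional on seminorms. -/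
def Homog (J : Seminorm ℝ E2 → ℝ) : Prop :=
  ∀ (c : NNReal) (s : Seminorm ℝ E2), J (c • s) = (c : ℝ) ^ 2 * J s

/-- `SL₂`-invariance of a functional on seminorms. -/
def SL2inv (J : Seminorm ℝ E2 → ℝ) : Prop :=
  ∀ (s : Seminorm ℝ E2) (T : SL2), J (compM s (T : Matrix (Fin 2) (Fin 2) ℝ)) = J s

/-- The Reshetnyak energy `I²₊(s) = max_{v ∈ S¹} s(v)²`. -/
def Iplus (s : Seminorm ℝ E2) : ℝ := ⨆ v : Metric.sphere (0 : E2) 1, (s (v : E2)) ^ 2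

/-- The unit ball of a seminorm. -/
def unitBallS (s : Seminorm ℝ E2) : Set E2 := {v | s v ≤ 1}

/-- The ellipse `M(D̄)` is inscribed in the unit ball of `s`. -/
def ellipseIn (s : Seminorm ℝ E2) (M : Matrix (Fin 2) (Fin 2) ℝ) : Prop :=
  (Matrix.toEuclideanLin M) '' (Metric.closedBall 0 1) ⊆ unitBallS s

/-- The area of the largest ellipse inscribed in the unit ball of `s`
(the area of the Loewner ellipse); the ellipse `M(D̄)` has area `π |det M|`. -/
def LoewnerArea (s : Seminorm ℝ E2) : ℝ :=
  sSup {a : ℝ | ∃ M : Matrix (Fin 2) (Fin 2) ℝ, ellipseIn s M ∧ a = π * |M.det|}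

/-- The inscribed Riemannian (Ivanov) Jacobian `J^i(s) = π / |L|`. -/
def Ji (s : Seminorm ℝ E2) : ℝ := π / LoewnerArea s

/-- `s` is isotropic: some round disc `t·D̄` is inscribed in the unit ball of `s` and has at
least the area of every inscribed ellipse, i.e. the Loewner ellipse is a round disc. -/
def Isotropic (s : Seminorm ℝ E2) : Prop :=
  ∃ t : ℝ, 0 < t ∧ Metric.closedBall (0 : E2) t ⊆ unitBallS s ∧
    ∀ M : Matrix (Fin 2) (Fin 2) ℝ, ellipseIn s M → π * |M.det| ≤ π * t ^ 2

/-- A Jacobian (definition of area): monotone, degree-2 homogeneous, `SL₂`-invariant,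
normalized on the Euclidean norm. -/
def IsJacobian (J : Seminorm ℝ E2 → ℝ) : Prop :=
  (∀ s, 0 ≤ J s) ∧ Monot J ∧ Homog J ∧ SL2inv J ∧ J (normSeminorm ℝ E2) = 1

/-- `q(μ) = inf_s J^μ(s)/J^i(s)` over norms `s`. -/
def qval (J : Seminorm ℝ E2 → ℝ) : ℝ :=
  sInf {r : ℝ | ∃ s : Seminorm ℝ E2, IsNorm s ∧ r = J s / Ji s}

/-! John's theorem by duality: suppose the Loewner ellipsoid of `s` is the unit ball `B`, but the
unit ball of `s` contains a `w` with `‖w‖² > n`. For `0 < t < 1` the quadratic form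
`(1 - t)‖u‖² + t⟪w, u⟫²` is at most the squared support function of `conv (B ∪ {±w})`, so it is the
squared support function of an inscribed ellipsoid. The squared ratio of its volume to that of `B`
is `(1 - t)ⁿ (1 + t / (1 - t) ‖w‖²)`, which exceeds `1` for small `t`. Hence `‖·‖ / √n ≤ s ≤ ‖·‖`.

For a norm `s` on the plane with Loewner ellipse `T(B)` this gives `‖·‖ / √2 ≤ s ∘ T ≤ ‖·‖`, so
monotonicity and homogeneity put `J (s ∘ T) = det T * J s = J s / Ji s` in `[1/2, 1]`. -/

open Module NormedSpace
open scoped RealInnerProductSpace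

section Seminorm

variable {E : Type*} [NormedAddCommGroup E] [NormedSpace ℝ E]

lemma seminorm_eq_norm_mul_normalize (s : Seminorm ℝ E) (v : E) :
    s v = ‖v‖ * s (normalize v) := by
  conv_lhs => rw [← norm_smul_normalize v, map_smul_eq_mul, norm_norm]

variable [FiniteDimensional ℝ E]

lemma continuous_seminorm_of_finiteDimensional (s : Seminorm ℝ E) : Continuous s :=
  continuousOn_univ.1 (s.convexOn.continuousOn isOpen_univ)

lemma exists_pos_mul_norm_le_seminorm {s : Seminorm ℝ E} (hs : ∀ v, v ≠ 0 → 0 < s v) :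
    ∃ c : ℝ, 0 < c ∧ ∀ v, c * ‖v‖ ≤ s v := by
  obtain ⟨c, hc, hcs⟩ := (isCompact_sphere (0 : E) 1).exists_forall_le'
    (continuous_seminorm_of_finiteDimensional s).continuousOn
    fun v hv => hs v (ne_zero_of_mem_unit_sphere ⟨v, hv⟩)
  refine ⟨c, hc, fun v => ?_⟩
  rcases eq_or_ne v 0 with rfl | hv
  · simp
  · rw [seminorm_eq_norm_mul_normalize s v, mul_comm]
    gcongr
    exact hcs _ (mem_sphere_zero_iff_norm.2 (norm_normalize hv))

end Seminorm

lemma exists_dual_abs_le_seminorm {V : Type*} [AddCommGroup V] [Module ℝ V] (s : Seminorm ℝ V)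
    (x : V) : ∃ f : Dual ℝ V, (∀ y, |f y| ≤ s y) ∧ f x = s x := by
  let : SeminormedAddCommGroup V := s.toSeminormedAddCommGroup
  let : NormedSpace ℝ V := ⟨fun c v => (map_smul_eq_mul s c v).le⟩
  obtain ⟨f, hf, hfx⟩ := exists_dual_vector'' ℝ x
  exact ⟨f, fun y => (f.le_of_opNorm_le hf y).trans_eq (one_mul _), hfx⟩

section Inscribed

variable {E : Type*} [NormedAddCommGroup E] [NormedSpace ℝ E]

/-- The ellipsoid `T(B)`, where `B` is the closed unit ball, is inscribed in the unit ball of `s`.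
This is encoded as `s ∘ T ≤ ‖·‖`. -/
def IsInscribed (s : Seminorm ℝ E) (T : E →ₗ[ℝ] E) : Prop :=
  s.comp T ≤ normSeminorm ℝ E

/-- The Loewner ellipsoid of `s`, the inscribed ellipsoid of largest volume, is `T(B)`.
The volume of `T(B)` is proportional to `|det T|`, and `T` is taken orientation preserving. -/
structure IsLoewnerMap (s : Seminorm ℝ E) (T : E →ₗ[ℝ] E) : Prop where
  isInscribed : IsInscribed s T
  det_pos : 0 < T.det
  abs_det_le : ∀ T' : E →ₗ[ℝ] E, IsInscribed s T' → |T'.det| ≤ T.det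

lemma isInscribed_iff_image_subset {s : Seminorm ℝ E} {T : E →ₗ[ℝ] E} :
    IsInscribed s T ↔ T '' Metric.closedBall 0 1 ⊆ {v | s v ≤ 1} := by
  rw [Set.image_subset_iff]
  refine ⟨fun h v hv => (h v).trans (mem_closedBall_zero_iff.1 hv), fun h v => ?_⟩
  rcases eq_or_ne v 0 with rfl | hv
  · simp
  · rw [seminorm_eq_norm_mul_normalize]
    exact mul_le_of_le_one_right (norm_nonneg v)
      (h (mem_closedBall_zero_iff.2 (norm_normalize hv).le))

lemma IsInscribed.comp_linearIsometry {s : Seminorm ℝ E} {T : E →ₗ[ℝ] E} (hT : IsInscribed s T)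
    (R : E →ₗᵢ[ℝ] E) : IsInscribed s (T ∘ₗ R.toLinearMap) :=
  fun v => (hT (R v)).trans_eq (R.norm_map v)

lemma IsLoewnerMap.comp_id {s : Seminorm ℝ E} {T : E →ₗ[ℝ] E} (hT : IsLoewnerMap s T) :
    IsLoewnerMap (s.comp T) LinearMap.id where
  isInscribed := hT.isInscribed
  det_pos := by simp
  abs_det_le T' hT' := by
    have h := hT.abs_det_le (T ∘ₗ T') hT'
    rw [LinearMap.det_comp, abs_mul, abs_of_pos hT.det_pos] at h
    simpa using (mul_le_iff_le_one_right hT.det_pos).1 h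

variable [FiniteDimensional ℝ E]

lemma exists_isInscribed_det_pos (s : Seminorm ℝ E) :
    ∃ T : E →ₗ[ℝ] E, IsInscribed s T ∧ 0 < T.det := by
  obtain ⟨C, hC, hsC⟩ :=
    s.bound_of_continuous_normedSpace (continuous_seminorm_of_finiteDimensional s)
  refine ⟨C⁻¹ • LinearMap.id, fun v => ?_, ?_⟩
  · change s (C⁻¹ • v) ≤ ‖v‖
    rw [map_smul_eq_mul, Real.norm_of_nonneg (by positivity), inv_mul_le_iff₀ hC]
    exact hsC v
  · rw [LinearMap.det_smul, LinearMap.det_id]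
    positivity

lemma isCompact_setOf_isInscribed {s : Seminorm ℝ E} (hs : ∀ v, v ≠ 0 → 0 < s v) :
    IsCompact {T : E →L[ℝ] E | IsInscribed s T} := by
  obtain ⟨c, hc, hcs⟩ := exists_pos_mul_norm_le_seminorm hs
  refine (isCompact_closedBall (0 : E →L[ℝ] E) c⁻¹).of_isClosed_subset ?_ fun T hT => ?_
  · change IsClosed {T : E →L[ℝ] E | ∀ v, s (T v) ≤ ‖v‖}
    simp only [Set.ofPred_forall]
    exact isClosed_iInter fun v => isClosed_le
      ((continuous_seminorm_of_finiteDimensional s).comp (continuous_eval_const v))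
      continuous_const
  · rw [mem_closedBall_zero_iff]
    refine T.opNorm_le_bound (by positivity) fun v => ?_
    rw [le_inv_mul_iff₀ hc]
    exact (hcs (T v)).trans (hT v)

end Inscribed

section John

variable {E : Type*} [NormedAddCommGroup E] [InnerProductSpace ℝ E] [FiniteDimensional ℝ E]

lemma exists_linearIsometry_det_eq_neg_one [Nontrivial E] :
    ∃ R : E →ₗᵢ[ℝ] E, R.toLinearMap.det = -1 := by
  obtain ⟨v, hv⟩ := exists_ne (0 : E)
  refine ⟨(ℝ ∙ v)ᗮ.reflection.toLinearIsometry, ?_⟩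
  have h := (ℝ ∙ v)ᗮ.det_reflection
  rwa [Submodule.orthogonal_orthogonal, finrank_span_singleton hv, pow_one] at h

theorem exists_isLoewnerMap [Nontrivial E] {s : Seminorm ℝ E} (hs : ∀ v, v ≠ 0 → 0 < s v) :
    ∃ T, IsLoewnerMap s T := by
  obtain ⟨T₀, hT₀, hdet₀⟩ := exists_isInscribed_det_pos s
  obtain ⟨R, hR⟩ := exists_linearIsometry_det_eq_neg_one (E := E)
  obtain ⟨T, hT, hmax⟩ := (isCompact_setOf_isInscribed hs).exists_isMaxOn
    ⟨T₀.toContinuousLinearMap, hT₀⟩ ContinuousLinearMap.continuous_det.continuousOn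
  have det_le (T' : E →ₗ[ℝ] E) (hT' : IsInscribed s T') : T'.det ≤ T.det :=
    hmax (a := T'.toContinuousLinearMap) hT'
  refine ⟨T, hT, hdet₀.trans_le (det_le T₀ hT₀), fun T' hT' => abs_le'.2 ⟨det_le T' hT', ?_⟩⟩
  have h := det_le _ (hT'.comp_linearIsometry R)
  rwa [LinearMap.det_comp, hR, mul_neg_one] at h

lemma exists_inner_le_seminorm (s : Seminorm ℝ E) (x : E) :
    ∃ u : E, (∀ y, |⟪u, y⟫| ≤ s y) ∧ ⟪u, x⟫ = s x := by
  obtain ⟨f, hf, hfx⟩ := exists_dual_abs_le_seminorm s x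
  have hu (y : E) : ⟪(InnerProductSpace.toDual ℝ E).symm f.toContinuousLinearMap, y⟫ = f y :=
    InnerProductSpace.toDual_symm_apply
  exact ⟨_, fun y => (hu y).symm ▸ hf y, (hu x).trans hfx⟩

lemma exists_isSymmetric_norm_sq_eq (w : E) {a b : ℝ} (ha : 0 ≤ a) (hb : 0 ≤ b) :
    ∃ T : E →ₗ[ℝ] E, T.IsSymmetric ∧ (∀ u, ‖T u‖ ^ 2 = a * (‖u‖ ^ 2 + b * ⟪w, u⟫ ^ 2)) ∧
      T.det ^ 2 = a ^ finrank ℝ E * (1 + b * ‖w‖ ^ 2) := by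
  -- `c` solves `(1 + c‖w‖²)² = 1 + b‖w‖²`, in a form that is also valid for `w = 0`.
  set r := √(1 + b * ‖w‖ ^ 2)
  have hr : r ^ 2 = 1 + b * ‖w‖ ^ 2 := Real.sq_sqrt (by positivity)
  have hr₀ : 0 < 1 + r := by positivity
  set c := b / (1 + r)
  have hcr : c * (1 + r) = b := div_mul_cancel₀ b hr₀.ne'
  have hcw : c * ‖w‖ ^ 2 = r - 1 := by
    refine mul_right_cancel₀ hr₀.ne' ?_
    linear_combination ‖w‖ ^ 2 * hcr - hr
  let T : E →ₗ[ℝ] E := √a • LinearMap.transvection (c • innerₛₗ ℝ w) w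
  have hT (u : E) : T u = √a • (u + (c * ⟪w, u⟫) • w) := rfl
  refine ⟨T, fun u v => ?_, fun u => ?_, ?_⟩
  · simp only [hT, inner_smul_left, inner_smul_right, inner_add_left, inner_add_right,
      real_inner_comm w, conj_trivial]
    ring
  · rw [hT, norm_smul, mul_pow, norm_add_sq_real, inner_smul_right, real_inner_comm w u, norm_smul,
      norm_of_nonneg (sqrt_nonneg a), sq_sqrt ha, mul_pow, norm_eq_abs, sq_abs]
    linear_combination a * ⟪w, u⟫ ^ 2 * (c * hcw + hcr)
  · have hdet : T.det = √a ^ finrank ℝ E * r := by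
      rw [LinearMap.det_smul, LinearMap.transvection.det]
      simp only [LinearMap.smul_apply, innerₛₗ_apply_apply, real_inner_self_eq_norm_sq, smul_eq_mul,
        hcw, add_sub_cancel]
    rw [hdet, mul_pow, ← pow_mul, mul_comm _ 2, pow_mul, sq_sqrt ha, hr]

lemma exists_one_lt_one_sub_pow_mul {n : ℕ} {m : ℝ} (hm : n < m) :
    ∃ t : ℝ, 0 < t ∧ t < 1 ∧ 1 < (1 - t) ^ n * (1 + t / (1 - t) * m) := by
  have hn : (0 : ℝ) ≤ n := n.cast_nonneg
  have hm₀ : 0 < m := hn.trans_lt hm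
  have hmn : 0 < m - n := sub_pos.2 hm
  set t := (m - n) / (2 * (n + 1) * m)
  have ht₀ : 0 < t := by positivity
  have ht₁ : t < 1 := (div_lt_one (by positivity)).2 (by nlinarith)
  have htm : (n + 1) * (t * m) = (m - n) / 2 := by
    simp only [t]
    field_simp
  have ht₁' : 0 < 1 - t := sub_pos.2 ht₁
  have hbernoulli : 1 - n * t ≤ (1 - t) ^ n := by
    linear_combination one_add_mul_le_pow (show -2 ≤ -t by linarith) n
  have htm_le : 1 + t * m ≤ 1 + t / (1 - t) * m := by
    gcongr
    exact le_div_self ht₀.le ht₁' (by linarith)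
  refine ⟨t, ht₀, ht₁, ?_⟩
  calc 1 < 1 + t * ((m - n) / 2 + t * m) := lt_add_of_pos_right 1 (by positivity)
    _ = (1 - n * t) * (1 + t * m) := by linear_combination t * htm
    _ ≤ (1 - t) ^ n * (1 + t / (1 - t) * m) := by gcongr

lemma exists_isInscribed_one_lt_abs_det {s : Seminorm ℝ E} (hs : s ≤ normSeminorm ℝ E) {w : E}
    (hsw : s w ≤ 1) (hw : finrank ℝ E < ‖w‖ ^ 2) :
    ∃ T : E →ₗ[ℝ] E, IsInscribed s T ∧ 1 < |T.det| := by
  obtain ⟨t, ht₀, ht₁, hdet⟩ := exists_one_lt_one_sub_pow_mul hw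
  have ht₁' : 0 < 1 - t := sub_pos.2 ht₁
  obtain ⟨T, hTsymm, hTnorm, hTdet⟩ :=
    exists_isSymmetric_norm_sq_eq w ht₁'.le (div_nonneg ht₀.le ht₁'.le)
  refine ⟨T, fun v => ?_, (one_lt_sq_iff_one_lt_abs _).1 (hTdet ▸ hdet)⟩
  obtain ⟨u, hus, hu⟩ := exists_inner_le_seminorm s (T v)
  have hu₁ : ‖u‖ ^ 2 ≤ 1 := by
    have h : ‖u‖ * ‖u‖ ≤ ‖u‖ :=
      calc ‖u‖ * ‖u‖ = ⟪u, u⟫ := (real_inner_self_eq_norm_mul_norm u).symm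
        _ ≤ s u := (le_abs_self _).trans (hus u)
        _ ≤ ‖u‖ := hs u
    nlinarith [norm_nonneg u]
  have huw : ⟪w, u⟫ ^ 2 ≤ 1 := by
    rw [sq_le_one_iff_abs_le_one, real_inner_comm]
    exact (hus w).trans hsw
  have hTu : ‖T u‖ ≤ 1 := by
    rw [← sq_le_one_iff₀ (norm_nonneg _)]
    calc ‖T u‖ ^ 2 = (1 - t) * ‖u‖ ^ 2 + t * ⟪w, u⟫ ^ 2 := by rw [hTnorm]; field_simp
      _ ≤ (1 - t) * 1 + t * 1 := by gcongr
      _ = 1 := by ring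
  calc s (T v) = ⟪T u, v⟫ := by rw [← hu, hTsymm u v]
    _ ≤ ‖T u‖ * ‖v‖ := real_inner_le_norm _ _
    _ ≤ ‖v‖ := mul_le_of_le_one_left (norm_nonneg v) hTu

theorem IsLoewnerMap.norm_sq_le_finrank_mul_sq {s : Seminorm ℝ E} {T : E →ₗ[ℝ] E}
    (hT : IsLoewnerMap s T) (v : E) : ‖v‖ ^ 2 ≤ finrank ℝ E * s (T v) ^ 2 := by
  by_contra! hv
  have hcont : Continuous fun r : ℝ => finrank ℝ E * r ^ 2 := by fun_prop
  obtain ⟨r, hr, hsr : s (T v) < r⟩ := ((hcont.continuousWithinAt.eventually_lt_const hv).and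
    (self_mem_nhdsWithin (s := Set.Ioi (s (T v))))).exists
  have hr₀ : 0 < r := (apply_nonneg s _).trans_lt hsr
  have hsw : s.comp T (r⁻¹ • v) ≤ 1 := by
    rw [map_smul_eq_mul, norm_inv, norm_of_nonneg hr₀.le, inv_mul_le_one₀ hr₀]
    exact hsr.le
  have hw : finrank ℝ E < ‖r⁻¹ • v‖ ^ 2 := by
    rwa [norm_smul, norm_inv, norm_of_nonneg hr₀.le, mul_pow, inv_pow,
      lt_inv_mul_iff₀ (by positivity), mul_comm]
  obtain ⟨N, hN, hdet⟩ := exists_isInscribed_one_lt_abs_det hT.isInscribed hsw hw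
  exact hdet.not_ge ((hT.comp_id.abs_det_le N hN).trans_eq LinearMap.det_id)

end John

section Jacobian

variable {s : Seminorm ℝ E2} {J : Seminorm ℝ E2 → ℝ} {T : E2 →ₗ[ℝ] E2}

lemma IsLoewnerMap.Ji_eq (hT : IsLoewnerMap s T) : Ji s = T.det⁻¹ := by
  have harea : LoewnerArea s = π * T.det := by
    refine IsGreatest.csSup_eq ⟨⟨toEuclideanLin.symm T, ?_, ?_⟩, ?_⟩
    · rw [ellipseIn, LinearEquiv.apply_symm_apply]
      exact isInscribed_iff_image_subset.1 hT.isInscribed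
    · rw [← LinearMap.det_toLpLin 2, LinearEquiv.apply_symm_apply, abs_of_pos hT.det_pos]
    · rintro _ ⟨M, hM, rfl⟩
      rw [← LinearMap.det_toLpLin 2]
      gcongr
      exact hT.abs_det_le _ (isInscribed_iff_image_subset.2 hM)
  rw [Ji, harea, div_mul_cancel_left₀ pi_ne_zero]

lemma IsNorm.Ji_pos (hs : IsNorm s) : 0 < Ji s := by
  obtain ⟨T, hT⟩ := exists_isLoewnerMap hs
  exact hT.Ji_eq ▸ inv_pos.2 hT.det_pos

lemma Homog.map_comp_eq_det_mul (hhom : Homog J) (hinv : SL2inv J) (s : Seminorm ℝ E2)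
    (hT : 0 < T.det) : J (s.comp T) = T.det * J s := by
  set d : NNReal := ⟨√T.det, sqrt_nonneg _⟩
  have hd : (d : ℝ) ^ 2 = T.det := sq_sqrt hT.le
  have hd₀ : (d : ℝ) ≠ 0 := (sqrt_pos.2 hT).ne'
  let M := toEuclideanLin.symm ((d : ℝ)⁻¹ • T)
  have hM : toEuclideanLin M = (d : ℝ)⁻¹ • T := LinearEquiv.apply_symm_apply _ _
  have hMdet : M.det = 1 := by
    rw [← LinearMap.det_toLpLin 2, hM, LinearMap.det_smul, finrank_euclideanSpace_fin, inv_pow, hd,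
      inv_mul_cancel₀ hT.ne']
  have hcomp : s.comp T = d • compM s M := by
    ext v
    rw [compM, hM, _root_.smul_apply, Seminorm.comp_apply, Seminorm.comp_apply,
      LinearMap.smul_apply, map_smul_eq_mul, norm_inv, norm_of_nonneg d.coe_nonneg, NNReal.smul_def,
      smul_eq_mul, mul_inv_cancel_left₀ hd₀]
  rw [hcomp, hhom, hinv s ⟨M, hMdet⟩, hd]

lemma IsJacobian.le_Ji (hJ : IsJacobian J) (hs : IsNorm s) : J s ≤ Ji s := by
  obtain ⟨-, hmono, hhom, hinv, hone⟩ := hJ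
  obtain ⟨T, hT⟩ := exists_isLoewnerMap hs
  rw [hT.Ji_eq, inv_eq_one_div, le_div_iff₀' hT.det_pos]
  calc T.det * J s = J (s.comp T) := (hhom.map_comp_eq_det_mul hinv s hT.det_pos).symm
    _ ≤ J (normSeminorm ℝ E2) := hmono _ _ hT.isInscribed
    _ = 1 := hone

lemma IsJacobian.Ji_le_two_mul (hJ : IsJacobian J) (hs : IsNorm s) : Ji s ≤ 2 * J s := by
  obtain ⟨-, hmono, hhom, hinv, hone⟩ := hJ
  obtain ⟨T, hT⟩ := exists_isLoewnerMap hs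
  set c := NNReal.sqrt (1 / 2)
  have hc : (c : ℝ) ^ 2 = 1 / 2 := by
    rw [← NNReal.coe_pow, NNReal.sq_sqrt, NNReal.coe_div, NNReal.coe_one, NNReal.coe_ofNat]
  have john : c • normSeminorm ℝ E2 ≤ s.comp T := fun v => by
    refine le_of_sq_le_sq ?_ (apply_nonneg s _)
    have h := hT.norm_sq_le_finrank_mul_sq v
    rw [finrank_euclideanSpace_fin, Nat.cast_ofNat] at h
    calc (c * ‖v‖) ^ 2 = 1 / 2 * ‖v‖ ^ 2 := by rw [mul_pow, hc]
      _ ≤ s (T v) ^ 2 := by linarith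
  have half_le : 1 / 2 ≤ T.det * J s :=
    calc 1 / 2 = J (c • normSeminorm ℝ E2) := by rw [hhom, hone, hc, mul_one]
      _ ≤ J (s.comp T) := hmono _ _ john
      _ = T.det * J s := hhom.map_comp_eq_det_mul hinv s hT.det_pos
  rw [hT.Ji_eq, inv_eq_one_div, div_le_iff₀' hT.det_pos]
  linarith

lemma qval_mem_Icc {a b : ℝ} (h : ∀ s, IsNorm s → J s / Ji s ∈ Set.Icc a b) :
    qval J ∈ Set.Icc a b := by
  have hnorm : IsNorm (normSeminorm ℝ E2) := fun _ => norm_pos_iff.2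
  have hlower : a ∈ lowerBounds {r | ∃ s, IsNorm s ∧ r = J s / Ji s} := by
    rintro _ ⟨s, hs, rfl⟩
    exact (h s hs).1
  exact ⟨le_csInf ⟨_, _, hnorm, rfl⟩ hlower,
    csInf_le_of_le ⟨a, hlower⟩ ⟨_, hnorm, rfl⟩ (h _ hnorm).2⟩

end Jacobian

/-- For every Jacobian `J^μ`, `1/2 ≤ q(μ) ≤ 1`, and `q(μ^i) = 1`. -/
theorem stmt18 :
    (∀ J : Seminorm ℝ E2 → ℝ, IsJacobian J → 1 / 2 ≤ qval J ∧ qval J ≤ 1) ∧ qval Ji = 1 := by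
  refine ⟨fun J hJ => qval_mem_Icc fun s hs => ⟨?_, ?_⟩, ?_⟩
  · rw [le_div_iff₀ hs.Ji_pos]
    linarith [hJ.Ji_le_two_mul hs]
  · exact div_le_one_of_le₀ (hJ.le_Ji hs) hs.Ji_pos.le
  · suffices h : qval Ji ∈ Set.Icc 1 1 by rwa [Set.Icc_self] at h
    exact qval_mem_Icc fun s hs => by simp [div_self hs.Ji_pos.ne']
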